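/- In the balls and bins problem with B bins and M = M(B) balls, let s ≥ 2 be a fixed integer. If M(B) = Θ(B^{1 − 1/s}) as B → ∞, then with high probability the maximum load is either s − 1 or s. Moreover, if M(B) = C·B^{1 − 1/s}·(1 + o(1)) for a constant C > 0, and X_B denotes the number of bins containing exactly s balls, then X_B converges in distribution, as B → ∞, to the Poisson distribution with parameter C^s/s!. -/

import Mathlib

open Filter Asymptotics

namespace BallsBins

attribute [local instance] Classical.propDecidable

/-- The load of bin `b` under the placement `f` of `M` balls into `B` bins. -/
def load {M B : ℕ} (f : Fin M → Fin B) (b : Fin B) : ℕ :=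
  (Finset.univ.filter fun i => f i = b).card

/-- The maximum load over all bins under the placement `f`. -/
def maxLoad {M B : ℕ} (f : Fin M → Fin B) : ℕ :=
  Finset.univ.sup (load f)

/-- The number of bins containing exactly `s` balls under the placement `f`. -/
def binsWithLoad {M B : ℕ} (f : Fin M → Fin B) (s : ℕ) : ℕ :=
  (Finset.univ.filter fun b => load f b = s).card

/-- The probability of the event `pred` when `M` balls are placed independently and
uniformly at random into `B` bins. -/
noncomputable def bbProb (B M : ℕ) (pred : (Fin M → Fin B) → Prop) : ℝ :=
  ((Finset.univ.filter fun f => pred f).card : ℝ) / (Fintype.card (Fin M → Fin B) : ℝ)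

/-!
Let `X` be the number of bins with exactly `s` balls. Its binomial moments `E[C(X, k)]` are counted
exactly by exposing `k` bins one after the other; when `M → ∞` and `M = o(B)`, they are asymptotic
to `λ ^ k / k!` with `λ = B · C(M, s) / B ^ s ~ B (M / B) ^ s / s!`. If `λ` converges, Bonferroni's
inequalities turn these moments into the Poisson limit. If `λ → ∞`, the first two moments and
Chebyshev's inequality show that some bin has load `s` w.h.p., and if `λ → 0`, Markov's inequality
shows that no bin has load `s` or more. For `M = Θ(B ^ (1 - 1 / s))`, the parameter `λ` at load `r`
is `Θ(B ^ (1 - r / s))`, so that `s - 1` and `s + 1` lie on either side of the critical load.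
-/

section Counting

open Finset

variable {α β : Type*}

lemma sum_choose_card_filter [Fintype α] [Fintype β] (p : α → β → Prop)
    [∀ a, DecidablePred (p a)] (k : ℕ) :
    ∑ a, (#{b | p a b}).choose k = ∑ S ∈ powersetCard k univ, #{a | ∀ b ∈ S, p a b} := by
  have choose_eq (a : α) :
      (#{b | p a b}).choose k = ∑ S ∈ powersetCard k univ, if ∀ b ∈ S, p a b then 1 else 0 := by
    rw [← card_powersetCard, ← card_filter]
    congr 1
    ext S
    simp [subset_iff, and_comm]
  simp_rw [choose_eq, card_filter]
  exact sum_comm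

lemma filter_sdiff_fiber_eq [DecidableEq α] [DecidableEq β] {f : α → β} {b c : β} (hcb : c ≠ b)
    (U : Finset α) :
    ({i ∈ U \ {i ∈ U | f i = b} | f i = c} : Finset α) = {i ∈ U | f i = c} := by
  ext i
  simp only [mem_filter, Finset.mem_sdiff]
  grind

variable [Fintype α] [DecidableEq α]

/-- The maps sending `U` into `W` and agreeing with `g` off `U`: the ways to complete a placement
in which only the balls in `U` are left and only the bins in `W` are open. -/
def completions (U : Finset α) (W : Finset β) (g : α → β) : Finset (α → β) :=
  Fintype.piFinset fun i => if i ∈ U then W else {g i}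

lemma mem_completions {U : Finset α} {W : Finset β} {g f : α → β} :
    f ∈ completions U W g ↔ ∀ i, if i ∈ U then f i ∈ W else f i = g i := by
  simp only [completions, Fintype.mem_piFinset]
  refine forall_congr' fun i => ?_
  split_ifs <;> simp

lemma card_completions (U : Finset α) (W : Finset β) (g : α → β) :
    #(completions U W g) = #W ^ #U := by
  simp [completions, Fintype.card_piFinset, apply_ite card]

lemma card_filter_forall_mem_eq [Fintype β] [DecidableEq β] (T : Finset α) (b : β) :
    #{f : α → β | ∀ i ∈ T, f i = b} = Fintype.card β ^ (Fintype.card α - #T) := by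
  rw [← card_compl, ← card_univ, ← card_completions Tᶜ univ fun _ => b]
  congr 1
  ext f
  simp only [mem_filter_univ, mem_completions]
  refine forall_congr' fun i => ?_
  by_cases hi : i ∈ T <;> simp [hi]

variable [DecidableEq β]

lemma filter_completions_fiber_eq {U T : Finset α} {W : Finset β} {b : β} (hT : T ⊆ U)
    (hb : b ∈ W) (g : α → β) :
    {f ∈ completions U W g | ({i ∈ U | f i = b} : Finset α) = T} =
      completions (U \ T) (W.erase b) fun i => if i ∈ T then b else g i := by
  ext f
  simp only [mem_filter, mem_completions, Finset.ext_iff, ← forall_and, Finset.mem_sdiff, mem_erase]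
  refine forall_congr' fun i => ?_
  have := @hT i
  by_cases hU : i ∈ U <;> by_cases hiT : i ∈ T <;> by_cases hf : f i = b <;> simp_all

lemma filter_completions_insert_fiber_eq {U T : Finset α} {W S : Finset β} {b : β} {s : ℕ}
    (hTU : T ⊆ U) (hTs : #T = s) (hbW : b ∈ W) (hbS : b ∉ S) (g : α → β) :
    {f ∈ {f ∈ completions U W g | ∀ c ∈ insert b S, #{i ∈ U | f i = c} = s} |
        ({i ∈ U | f i = b} : Finset α) = T} =
      {f ∈ completions (U \ T) (W.erase b) (fun i => if i ∈ T then b else g i) |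
        ∀ c ∈ S, #{i ∈ U \ T | f i = c} = s} := by
  rw [← filter_completions_fiber_eq hTU hbW, filter_filter, filter_filter]
  refine filter_congr fun f _ => ?_
  have load_eq (hfT : ({i ∈ U | f i = b} : Finset α) = T) (c : β) (hc : c ∈ S) :
      #{i ∈ U \ T | f i = c} = #{i ∈ U | f i = c} := by
    rw [← hfT, filter_sdiff_fiber_eq (ne_of_mem_of_not_mem hc hbS)]
  rw [forall_mem_insert, and_comm]
  refine and_congr_right fun hfT => ?_
  rw [hfT, and_iff_right hTs]
  exact forall₂_congr fun c hc => by rw [load_eq hfT c hc]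

-- The bins of `S` are exposed one at a time: once the `s` balls of the first bin are chosen,
-- what is left is the same counting problem with fewer balls and one open bin less.
lemma card_filter_completions (s : ℕ) {S W : Finset β} (hSW : S ⊆ W) (U : Finset α) (g : α → β) :
    #{f ∈ completions U W g | ∀ b ∈ S, #{i ∈ U | f i = b} = s} =
      (∏ j ∈ range #S, (#U - j * s).choose s) * (#W - #S) ^ (#U - #S * s) := by
  induction S using Finset.induction_on generalizing U W g with
  | empty => simp [card_completions]
  | insert b S hbS ih =>
    obtain ⟨hbW, hSW⟩ := insert_subset_iff.1 hSW
    have card_fiber {T : Finset α} (hT : T ∈ powersetCard s U) :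
        #{f ∈ {f ∈ completions U W g | ∀ c ∈ insert b S, #{i ∈ U | f i = c} = s} |
            ({i ∈ U | f i = b} : Finset α) = T} =
          (∏ j ∈ range #S, (#U - (j + 1) * s).choose s) *
            (#W - (#S + 1)) ^ (#U - (#S + 1) * s) := by
      obtain ⟨hTU, hTs⟩ := mem_powersetCard.1 hT
      rw [filter_completions_insert_fiber_eq hTU hTs hbW hbS, ih (subset_erase.2 ⟨hSW, hbS⟩),
        card_sdiff_of_subset hTU, hTs, card_erase_of_mem hbW]
      simp only [add_mul, one_mul, Nat.sub_sub, add_comm]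
    have maps_to_powersetCard : ∀ f ∈
        {f ∈ completions U W g | ∀ c ∈ insert b S, #{i ∈ U | f i = c} = s},
        ({i ∈ U | f i = b} : Finset α) ∈ powersetCard s U := fun f hf =>
      mem_powersetCard.2 ⟨filter_subset _ _, (mem_filter.1 hf).2 b (mem_insert_self b S)⟩
    rw [card_eq_sum_card_fiberwise maps_to_powersetCard, sum_congr rfl fun T => card_fiber,
      sum_const, card_powersetCard, card_insert_of_notMem hbS, prod_range_succ', smul_eq_mul,
      zero_mul, Nat.sub_zero]
    ring

variable [Fintype β]

lemma card_filter_forall_card_fiber_eq (s : ℕ) (S : Finset β) :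
    #{f : α → β | ∀ b ∈ S, #{i | f i = b} = s} =
      (∏ j ∈ range #S, (Fintype.card α - j * s).choose s) *
        (Fintype.card β - #S) ^ (Fintype.card α - #S * s) := by
  rcases S.eq_empty_or_nonempty with rfl | ⟨b, _⟩
  · simp
  have completions_univ : completions univ univ (fun _ : α => b) = univ := by
    ext
    simp [mem_completions]
  have card_eq := card_filter_completions s (subset_univ S) univ fun _ : α => b
  rw [completions_univ, card_univ, card_univ] at card_eq
  convert card_eq

lemma sum_choose_card_fibers_eq (s k : ℕ) :
    ∑ f : α → β, (#{b | #{i | f i = b} = s}).choose k =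
      (Fintype.card β).choose k * ((∏ j ∈ range k, (Fintype.card α - j * s).choose s) *
        (Fintype.card β - k) ^ (Fintype.card α - k * s)) := by
  rw [sum_choose_card_filter, ← card_univ (α := β), ← card_powersetCard, ← smul_eq_mul, ← sum_const]
  refine sum_congr rfl fun S hS => ?_
  rw [card_univ, ← (mem_powersetCard.1 hS).2]
  convert card_filter_forall_card_fiber_eq s S

lemma sum_choose_card_fiber (s : ℕ) (b : β) :
    ∑ f : α → β, (#{i | f i = b}).choose s =
      (Fintype.card α).choose s * Fintype.card β ^ (Fintype.card α - s) := by
  rw [sum_choose_card_filter, ← card_univ (α := α), ← card_powersetCard, ← smul_eq_mul, ← sum_const]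
  refine sum_congr rfl fun T hT => ?_
  rw [card_univ, ← (mem_powersetCard.1 hT).2]
  convert card_filter_forall_mem_eq T b

end Counting

lemma sum_choose_binsWithLoad (M B s k : ℕ) :
    ∑ f : Fin M → Fin B, (binsWithLoad f s).choose k =
      B.choose k * ((∏ j ∈ Finset.range k, (M - j * s).choose s) * (B - k) ^ (M - k * s)) := by
  have sum_eq := sum_choose_card_fibers_eq (α := Fin M) (β := Fin B) s k
  rwa [Fintype.card_fin, Fintype.card_fin] at sum_eq

lemma sum_choose_load {M B : ℕ} (s : ℕ) (b : Fin B) :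
    ∑ f : Fin M → Fin B, (load f b).choose s = M.choose s * B ^ (M - s) := by
  simpa [load] using sum_choose_card_fiber (α := Fin M) s b

section Moments

open Finset MeasureTheory ProbabilityTheory Topology

lemma abs_ite_sub_alternating_sum_choose_le (n m : ℕ) :
    |(if n = 0 then (1 : ℝ) else 0) - ∑ i ∈ range m, (-1) ^ i * (n.choose i : ℝ)| ≤ n.choose m := by
  rcases m with _ | m
  · split_ifs <;> simp
  rcases n with _ | n
  · simp [sum_range_succ']
  have sum_eq : ∑ i ∈ range (m + 1), (-1 : ℝ) ^ i * (n + 1).choose i = (-1) ^ m * n.choose m := by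
    exact_mod_cast Int.alternating_sum_range_choose_eq_choose (n := n) (m := m)
  simp only [sum_eq, n.succ_ne_zero, if_false, zero_sub, abs_neg, abs_mul, abs_pow, abs_one,
    one_pow, one_mul, Nat.abs_cast, Nat.cast_le]
  exact Nat.choose_succ_succ n m ▸ Nat.le_add_right _ _

lemma abs_ite_sub_sum_choose_le (x j m : ℕ) :
    |(if x = j then (1 : ℝ) else 0) -
        ∑ i ∈ range m, (-1) ^ i * ((j + i).choose j : ℝ) * x.choose (j + i)| ≤
      (j + m).choose j * x.choose (j + m) := by
  have choose_mul_choose (i : ℕ) :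
      ((j + i).choose j * x.choose (j + i) : ℝ) = x.choose j * (x - j).choose i := by
    have := Nat.choose_mul (n := x) (Nat.le_add_right j i)
    rw [Nat.add_sub_cancel_left] at this
    rw [mul_comm]
    exact_mod_cast this
  have ite_eq : (if x = j then (1 : ℝ) else 0) = x.choose j * if x - j = 0 then 1 else 0 := by
    rcases lt_trichotomy x j with h | rfl | h
    · simp [h.ne, Nat.choose_eq_zero_of_lt h]
    · simp
    · simp [h.ne', Nat.sub_ne_zero_of_lt h]
  simp only [mul_assoc, choose_mul_choose, ite_eq, mul_left_comm _ (x.choose j : ℝ), ← mul_sum,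
    ← mul_sub, abs_mul, Nat.abs_cast]
  gcongr
  exact abs_ite_sub_alternating_sum_choose_le (x - j) m

lemma tendsto_of_abs_sub_le {ι κ : Type*} {l : Filter ι} {l' : Filter κ} [l'.NeBot]
    {p : ι → ℝ} {S e : κ → ι → ℝ} {A E : κ → ℝ} {L : ℝ}
    (hp : ∀ m i, |p i - S m i| ≤ e m i) (hS : ∀ m, Tendsto (S m) l (𝓝 (A m)))
    (he : ∀ m, Tendsto (e m) l (𝓝 (E m))) (hA : Tendsto A l' (𝓝 L)) (hE : Tendsto E l' (𝓝 0)) :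
    Tendsto p l (𝓝 L) := by
  refine Metric.tendsto_nhds.2 fun ε hε => ?_
  have limit_error : Tendsto (fun m => E m + |A m - L|) l' (𝓝 0) := by
    simpa using hE.add (hA.sub_const L).abs
  obtain ⟨m, hm⟩ := (limit_error.eventually_lt_const hε).exists
  filter_upwards [((he m).add ((hS m).sub_const L).abs).eventually_lt_const hm] with i hi
  calc |p i - L| ≤ |p i - S m i| + |S m i - L| := abs_sub_le _ _ _
    _ ≤ e m i + |S m i - L| := by gcongr; exact hp m i
    _ < ε := hi

lemma choose_mul_pow_div_factorial (r : ℝ) (j i : ℕ) :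
    (j + i).choose j * (r ^ (j + i) / (j + i).factorial) =
      r ^ j / j.factorial * (r ^ i / i.factorial) := by
  rw [Nat.cast_add_choose]
  field_simp [Nat.factorial_ne_zero]
  ring

lemma hasSum_poisson (r : ℝ) (j : ℕ) :
    HasSum (fun i : ℕ => (-1) ^ i * ((j + i).choose j : ℝ) * (r ^ (j + i) / (j + i).factorial))
      (Real.exp (-r) * r ^ j / j.factorial) := by
  have hasSum_exp := (NormedSpace.expSeries_div_hasSum_exp (-r)).mul_left (r ^ j / j.factorial)
  rw [← Real.exp_eq_exp_ℝ] at hasSum_exp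
  convert! hasSum_exp using 1
  · ext i
    rw [mul_assoc, choose_mul_pow_div_factorial, neg_pow]
    ring
  · ring

variable {ι : Type*} {l : Filter ι} {Ω : ι → Type*} [∀ i, MeasurableSpace (Ω i)]
  {μ : ∀ i, Measure (Ω i)} {X : ∀ i, Ω i → ℕ}

lemma abs_measureReal_sub_sum_integral_choose_le {Ω : Type*} [MeasurableSpace Ω] {μ : Measure Ω}
    {X : Ω → ℕ} (hX : Measurable X)
    (hXint : ∀ k, Integrable (fun ω => ((X ω).choose k : ℝ)) μ) (j m : ℕ) :
    |μ.real {ω | X ω = j} - ∑ k ∈ range m,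
        (-1) ^ k * ((j + k).choose j : ℝ) * ∫ ω, ((X ω).choose (j + k) : ℝ) ∂μ| ≤
      (j + m).choose j * ∫ ω, ((X ω).choose (j + m) : ℝ) ∂μ := by
  have : IsFiniteMeasure μ := by
    simpa [integrable_const_iff] using hXint 0
  have hXj : MeasurableSet {ω | X ω = j} := hX (measurableSet_singleton j)
  have measureReal_eq : μ.real {ω | X ω = j} = ∫ ω, (if X ω = j then 1 else 0 : ℝ) ∂μ := by
    simp [← integral_indicator_one hXj, Set.indicator_apply]
  rw [measureReal_eq]
  simp only [← integral_const_mul]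
  rw [← integral_finsetSum _ fun k _ => (hXint (j + k)).const_mul _, ← integral_sub]
  · refine (abs_integral_le_integral_abs).trans (integral_mono_of_nonneg ?_ ?_ ?_)
    · exact .of_forall fun ω => abs_nonneg _
    · exact (hXint _).const_mul _
    · exact .of_forall fun ω => abs_ite_sub_sum_choose_le _ _ _
  · exact ((integrable_const (1 : ℝ)).indicator hXj).congr <| .of_forall fun ω => by
      simp [Set.indicator_apply]
  · exact integrable_finsetSum _ fun k _ => (hXint (j + k)).const_mul _

theorem tendsto_measureReal_eq_of_tendsto_integral_choose {r : ℝ} (hX : ∀ i, Measurable (X i))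
    (hXint : ∀ i k, Integrable (fun ω => ((X i ω).choose k : ℝ)) (μ i))
    (hmoments : ∀ k, Tendsto (fun i => ∫ ω, ((X i ω).choose k : ℝ) ∂μ i) l
      (𝓝 (r ^ k / k.factorial))) (j : ℕ) :
    Tendsto (fun i => (μ i).real {ω | X i ω = j}) l
      (𝓝 (Real.exp (-r) * r ^ j / j.factorial)) := by
  refine tendsto_of_abs_sub_le
    (fun m i => abs_measureReal_sub_sum_integral_choose_le (hX i) (hXint i) j m)
    (fun m => tendsto_finsetSum _ fun k _ => (hmoments (j + k)).const_mul _)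
    (fun m => (hmoments (j + m)).const_mul _) (hasSum_poisson r j).tendsto_sum_nat ?_
  simp only [choose_mul_pow_div_factorial]
  simpa using (FloorSemiring.tendsto_pow_div_factorial_atTop r).const_mul (r ^ j / j.factorial)

lemma measureReal_eq_zero_le {Ω : Type*} [MeasurableSpace Ω] {μ : Measure Ω} {X : Ω → ℕ}
    (hXint : ∀ k ≤ 2, Integrable (fun ω => ((X ω).choose k : ℝ)) μ) {a : ℝ} (ha : a ≠ 0) :
    μ.real {ω | X ω = 0} ≤ 2 / a ^ 2 * ∫ ω, ((X ω).choose 2 : ℝ) ∂μ +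
      (1 / a ^ 2 - 2 / a) * ∫ ω, ((X ω).choose 1 : ℝ) ∂μ + ∫ ω, ((X ω).choose 0 : ℝ) ∂μ := by
  have : IsFiniteMeasure μ := by
    simpa [integrable_const_iff] using hXint 0 zero_le_two
  have sq_eq (x : ℕ) : 2 / a ^ 2 * (x.choose 2 : ℝ) + (1 / a ^ 2 - 2 / a) * x.choose 1 +
      x.choose 0 = (x / a - 1) ^ 2 := by
    rw [Nat.cast_choose_two, Nat.choose_one_right, Nat.choose_zero_right, Nat.cast_one]
    field_simp
    ring
  have integrable_two_one := ((hXint 2 le_rfl).const_mul (2 / a ^ 2)).fun_add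
    ((hXint 1 one_le_two).const_mul (1 / a ^ 2 - 2 / a))
  have integrable_sq : Integrable (fun ω => ((X ω : ℝ) / a - 1) ^ 2) μ :=
    (integrable_two_one.fun_add (hXint 0 zero_le_two)).congr (.of_forall fun ω => sq_eq (X ω))
  -- Chebyshev's inequality, but around `a`, which need not be the mean of `X`.
  calc μ.real {ω | X ω = 0} ≤ μ.real {ω | 1 ≤ ((X ω : ℝ) / a - 1) ^ 2} :=
        measureReal_mono fun ω (hω : X ω = 0) => by simp [hω]
    _ ≤ ∫ ω, ((X ω : ℝ) / a - 1) ^ 2 ∂μ := by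
        simpa using mul_meas_ge_le_integral_of_nonneg (.of_forall fun ω => sq_nonneg _)
          integrable_sq 1
    _ = _ := by
        simp only [← sq_eq]
        rw [integral_add integrable_two_one (hXint 0 zero_le_two),
          integral_add ((hXint 2 le_rfl).const_mul _) ((hXint 1 one_le_two).const_mul _),
          integral_const_mul, integral_const_mul]

theorem tendsto_measureReal_eq_zero_of_isEquivalent_integral_choose {a : ι → ℝ}
    (hXint : ∀ i, ∀ k ≤ 2, Integrable (fun ω => ((X i ω).choose k : ℝ)) (μ i))
    (hmoments : ∀ k ≤ 2,
      (fun i => ∫ ω, ((X i ω).choose k : ℝ) ∂μ i) ~[l] fun i => a i ^ k / k.factorial)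
    (ha : Tendsto a l atTop) :
    Tendsto (fun i => (μ i).real {ω | X i ω = 0}) l (𝓝 0) := by
  have ha0 : ∀ᶠ i in l, a i ≠ 0 := ha.eventually_ne_atTop 0
  have ratio (k : ℕ) (hk : k ≤ 2) :
      Tendsto (fun i => (∫ ω, ((X i ω).choose k : ℝ) ∂μ i) / a i ^ k) l
        (𝓝 (1 / k.factorial)) := by
    refine ((hmoments k hk).div (IsEquivalent.refl (u := fun i => a i ^ k))).symm.tendsto_nhds ?_
    refine tendsto_const_nhds.congr' ?_
    filter_upwards [ha0] with i hi
    rw [Pi.div_apply]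
    field_simp
  have inv_a : Tendsto (fun i => (a i)⁻¹) l (𝓝 0) := tendsto_inv_atTop_zero.comp ha
  have bound := (((ratio 2 le_rfl).const_mul 2).add
    ((inv_a.sub_const 2).mul (ratio 1 one_le_two))).add (ratio 0 zero_le_two)
  have limit_eq_zero : 2 * (1 / (Nat.factorial 2 : ℝ)) + (0 - 2) * (1 / (Nat.factorial 1 : ℝ)) +
      1 / (Nat.factorial 0 : ℝ) = 0 := by
    norm_num
  rw [limit_eq_zero] at bound
  refine squeeze_zero' (.of_forall fun i => measureReal_nonneg) ?_ bound
  filter_upwards [ha0] with i hi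
  refine (measureReal_eq_zero_le (hXint i) hi).trans_eq ?_
  field_simp

end Moments

section Placement

open MeasureTheory ProbabilityTheory Topology

lemma integral_uniformOn_univ {Ω : Type*} [Fintype Ω] [MeasurableSpace Ω]
    [MeasurableSingletonClass Ω] (g : Ω → ℝ) :
    ∫ ω, g ω ∂uniformOn Set.univ = (∑ ω, g ω) / Fintype.card Ω := by
  rw [integral_fintype .of_finite, Finset.sum_div]
  refine Finset.sum_congr rfl fun ω _ => ?_
  rw [Measure.real, uniformOn_univ]
  simp [div_eq_inv_mul]

/-- The law of `M` balls thrown independently and uniformly at random into `B` bins: the uniform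
distribution on all placements (the zero measure when there are balls but no bins). -/
noncomputable abbrev placementMeasure (B M : ℕ) : Measure (Fin M → Fin B) :=
  uniformOn Set.univ

lemma bbProb_eq_measureReal (B M : ℕ) (p : (Fin M → Fin B) → Prop) :
    bbProb B M p = (placementMeasure B M).real {f | p f} := by
  rw [Measure.real, uniformOn_univ, ENNReal.toReal_div, ← Finset.coe_filter_univ,
    Measure.count_apply_finset]
  simp [bbProb]

lemma integral_placementMeasure (B M : ℕ) (g : (Fin M → Fin B) → ℝ) :
    ∫ f, g f ∂placementMeasure B M = (∑ f, g f) / B ^ M := by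
  simp [integral_uniformOn_univ]

/-- The expected number of pairs of a bin and a set of `s` balls that all land in it. Whether some
bin receives `s` balls is decided by whether this is large or small. -/
noncomputable def intensity (B M s : ℕ) : ℝ :=
  B * (M.choose s / B ^ s)

lemma integral_sum_choose_load (B M s : ℕ) :
    ∫ f, (∑ b, ((load f b).choose s : ℝ)) ∂placementMeasure B M = intensity B M s := by
  have sum_eq : ∑ f : Fin M → Fin B, ∑ b, ((load f b).choose s : ℝ) =
      B * (M.choose s * B ^ (M - s)) := by
    rw [Finset.sum_comm]
    exact_mod_cast by simp [sum_choose_load]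
  rw [integral_placementMeasure, sum_eq, intensity, mul_div_assoc]
  rcases lt_or_ge M s with hMs | hsM
  · simp [Nat.choose_eq_zero_of_lt hMs]
  rcases eq_or_ne B 0 with rfl | hB
  · simp
  rw [← Nat.sub_add_cancel hsM, pow_add, Nat.add_sub_cancel]
  field_simp

lemma prod_choose_sub_eq_zero {M s k : ℕ} (h : M < k * s) :
    ∏ j ∈ Finset.range k, (M - j * s).choose s = 0 := by
  obtain ⟨hk, hs⟩ := mul_ne_zero_iff.1 (Nat.ne_zero_of_lt h)
  obtain ⟨k, rfl⟩ := Nat.exists_eq_add_one_of_ne_zero hk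
  rw [add_one_mul] at h
  rw [Finset.prod_range_succ, Nat.choose_eq_zero_of_lt (by lia), mul_zero]

lemma integral_choose_binsWithLoad (B M s k : ℕ) [NeZero B] :
    ∫ f, ((binsWithLoad f s).choose k : ℝ) ∂placementMeasure B M =
      B.choose k * (∏ j ∈ Finset.range k, ((M - j * s).choose s / B ^ s : ℝ)) *
        (1 - k / B) ^ (M - k * s) := by
  have hB : (B : ℝ) ≠ 0 := NeZero.ne _
  rw [integral_placementMeasure, ← Nat.cast_sum, sum_choose_binsWithLoad, Finset.prod_div_distrib,
    Finset.prod_const, Finset.card_range, ← pow_mul', one_sub_div hB, div_pow]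
  rcases lt_or_ge B k with hBk | hkB
  · simp [Nat.choose_eq_zero_of_lt hBk]
  rcases lt_or_ge M (k * s) with hMks | hksM
  · simp [prod_choose_sub_eq_zero hMks, ← Nat.cast_prod]
  have pow_eq : (B : ℝ) ^ M = B ^ (k * s) * B ^ (M - k * s) := by
    rw [← pow_add, Nat.add_sub_cancel' hksM]
  rw [pow_eq]
  push_cast [hkB]
  field_simp

lemma measureReal_le_maxLoad_le_intensity (B M s : ℕ) [NeZero B] :
    (placementMeasure B M).real {f | s ≤ maxLoad f} ≤ intensity B M s := by
  rw [← integral_sum_choose_load]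
  calc (placementMeasure B M).real {f | s ≤ maxLoad f}
      ≤ (placementMeasure B M).real {f | 1 ≤ ∑ b, ((load f b).choose s : ℝ)} := by
        refine measureReal_mono fun f hf => ?_
        obtain ⟨b, -, maxLoad_eq⟩ := Finset.exists_mem_eq_sup Finset.univ Finset.univ_nonempty
          (load f)
        have choose_pos : 0 < (load f b).choose s := Nat.choose_pos (maxLoad_eq ▸ hf)
        have choose_le_sum : (load f b).choose s ≤ ∑ b, (load f b).choose s :=
          Finset.single_le_sum_of_canonicallyOrdered (f := fun b => (load f b).choose s)
            (Finset.mem_univ b)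
        exact_mod_cast choose_pos.trans_le choose_le_sum
    _ ≤ ∫ f, (∑ b, ((load f b).choose s : ℝ)) ∂placementMeasure B M := by
        simpa using mul_meas_ge_le_integral_of_nonneg (.of_forall fun f => by positivity)
          .of_finite 1

end Placement

section Asymptotics

open MeasureTheory ProbabilityTheory Topology

lemma isEquivalent_natCast_sub (c : ℕ) :
    (fun n : ℕ => ((n - c : ℕ) : ℝ)) ~[atTop] fun n => (n : ℝ) := by
  refine (isEquivalent_iff_tendsto_one ?_).2 ?_
  · filter_upwards [eventually_ne_atTop 0] with n hn
    exact_mod_cast hn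
  · rw [← tendsto_add_atTop_iff_nat c]
    simpa using tendsto_natCast_div_add_atTop (c : ℝ)

lemma isEquivalent_choose_sub (c r : ℕ) :
    (fun n : ℕ => ((n - c).choose r : ℝ)) ~[atTop] fun n => (n.choose r : ℝ) :=
  ((isEquivalent_choose r).comp_tendsto (tendsto_sub_atTop_nat c)).trans
    ((((isEquivalent_natCast_sub c).pow r).div .refl).trans (isEquivalent_choose r).symm)

lemma tendsto_one_sub_pow {ι : Type*} {l : Filter ι} {x : ι → ℝ} {n : ι → ℕ}
    (hx : ∀ᶠ i in l, x i ∈ Set.Icc 0 1) (hnx : Tendsto (fun i => n i * x i) l (𝓝 0)) :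
    Tendsto (fun i => (1 - x i) ^ n i) l (𝓝 1) := by
  have lower : Tendsto (fun i => 1 - n i * x i) l (𝓝 1) := by simpa using hnx.const_sub 1
  refine tendsto_of_tendsto_of_tendsto_of_le_of_le' lower tendsto_const_nhds ?_ ?_
  · filter_upwards [hx] with i ⟨_, hx1⟩
    simpa [sub_eq_add_neg] using one_add_mul_le_pow (a := -x i) (by linarith) (n i)
  · filter_upwards [hx] with i ⟨hx0, hx1⟩
    exact pow_le_one₀ (by linarith) (by linarith)

variable {M : ℕ → ℕ}

lemma isEquivalent_integral_choose_binsWithLoad (hM : Tendsto M atTop atTop)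
    (hMB : Tendsto (fun B => (M B / B : ℝ)) atTop (𝓝 0)) (s k : ℕ) :
    (fun B => ∫ f, ((binsWithLoad f s).choose k : ℝ) ∂placementMeasure B (M B)) ~[atTop]
      fun B => intensity B (M B) s ^ k / k.factorial := by
  have prod_equiv : (fun B => ∏ j ∈ Finset.range k, ((M B - j * s).choose s / B ^ s : ℝ)) ~[atTop]
      fun B => ∏ _j ∈ Finset.range k, ((M B).choose s / B ^ s : ℝ) :=
    .finsetProd fun j _ => ((isEquivalent_choose_sub (j * s) s).comp_tendsto hM).div .refl
  have pow_equiv : (fun B : ℕ => (1 - k / B : ℝ) ^ (M B - k * s)) ~[atTop] fun _ => (1 : ℝ) := by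
    refine (isEquivalent_const_iff_tendsto one_ne_zero).2 (tendsto_one_sub_pow ?_ ?_)
    · filter_upwards [eventually_ge_atTop k] with B hB
      exact ⟨by positivity, div_le_one_of_le₀ (by exact_mod_cast hB) (by positivity)⟩
    · refine squeeze_zero (fun B => by positivity) (fun B => ?_)
        (by simpa using hMB.const_mul (k : ℝ))
      rw [mul_div_left_comm]
      gcongr
      exact Nat.sub_le _ _
  refine ((((isEquivalent_choose k).mul prod_equiv).mul pow_equiv).congr_left ?_).congr_right ?_
  · filter_upwards [eventually_ne_atTop 0] with B hB
    have : NeZero B := ⟨hB⟩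
    exact (integral_choose_binsWithLoad B (M B) s k).symm
  · refine .of_forall fun B => ?_
    simp only [intensity, mul_pow, Pi.mul_apply, Finset.prod_const, Finset.card_range, mul_one]
    ring

lemma tendsto_measureReal_binsWithLoad_eq {r : ℝ} {s : ℕ} (hM : Tendsto M atTop atTop)
    (hMB : Tendsto (fun B => (M B / B : ℝ)) atTop (𝓝 0))
    (hr : Tendsto (fun B => intensity B (M B) s) atTop (𝓝 r)) (j : ℕ) :
    Tendsto (fun B => (placementMeasure B (M B)).real {f | binsWithLoad f s = j}) atTop
      (𝓝 (Real.exp (-r) * r ^ j / j.factorial)) :=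
  tendsto_measureReal_eq_of_tendsto_integral_choose (fun _ => .of_discrete)
    (fun _ _ => .of_finite)
    (fun k => (isEquivalent_integral_choose_binsWithLoad hM hMB s k).symm.tendsto_nhds
      ((hr.pow k).div_const _)) j

lemma tendsto_measureReal_binsWithLoad_eq_zero {s : ℕ} (hM : Tendsto M atTop atTop)
    (hMB : Tendsto (fun B => (M B / B : ℝ)) atTop (𝓝 0))
    (hs : Tendsto (fun B => intensity B (M B) s) atTop atTop) :
    Tendsto (fun B => (placementMeasure B (M B)).real {f | binsWithLoad f s = 0}) atTop (𝓝 0) :=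
  tendsto_measureReal_eq_zero_of_isEquivalent_integral_choose (fun _ _ _ => .of_finite)
    (fun k _ => isEquivalent_integral_choose_binsWithLoad hM hMB s k) hs

lemma tendsto_measureReal_le_maxLoad {s : ℕ}
    (hs : Tendsto (fun B => intensity B (M B) s) atTop (𝓝 0)) :
    Tendsto (fun B => (placementMeasure B (M B)).real {f | s ≤ maxLoad f}) atTop (𝓝 0) := by
  refine squeeze_zero' (.of_forall fun B => measureReal_nonneg) ?_ hs
  filter_upwards [eventually_ne_atTop 0] with B hB
  have : NeZero B := ⟨hB⟩
  exact measureReal_le_maxLoad_le_intensity B (M B) s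

lemma le_maxLoad_of_binsWithLoad_ne_zero {B M s : ℕ} {f : Fin M → Fin B}
    (hf : binsWithLoad f s ≠ 0) : s ≤ maxLoad f := by
  obtain ⟨b, hb⟩ := Finset.card_ne_zero.1 hf
  exact (Finset.mem_filter.1 hb).2 ▸ Finset.le_sup (Finset.mem_univ b)

lemma one_sub_sub_le_measureReal_maxLoad_eq_or_eq {B M : ℕ} (μ : Measure (Fin M → Fin B))
    [IsProbabilityMeasure μ] (s : ℕ) :
    1 - μ.real {f | binsWithLoad f s = 0} - μ.real {f | s + 2 ≤ maxLoad f} ≤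
      μ.real {f | maxLoad f = s ∨ maxLoad f = s + 1} := by
  have cover : (Set.univ : Set (Fin M → Fin B)) ⊆ {f | maxLoad f = s ∨ maxLoad f = s + 1} ∪
      {f | binsWithLoad f s = 0} ∪ {f | s + 2 ≤ maxLoad f} := by
    rintro f -
    have := le_maxLoad_of_binsWithLoad_ne_zero (f := f) (s := s)
    simp only [Set.mem_union, Set.mem_ofPred_eq]
    lia
  have union_bound : μ.real Set.univ ≤ μ.real {f | maxLoad f = s ∨ maxLoad f = s + 1} +
      μ.real {f | binsWithLoad f s = 0} + μ.real {f | s + 2 ≤ maxLoad f} :=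
    (measureReal_mono cover).trans <| (measureReal_union_le _ _).trans <| by
      gcongr
      exact measureReal_union_le _ _
  rw [probReal_univ] at union_bound
  linarith

lemma tendsto_measureReal_maxLoad_eq_or_eq {s : ℕ} (hM : Tendsto M atTop atTop)
    (hMB : Tendsto (fun B => (M B / B : ℝ)) atTop (𝓝 0))
    (hs : Tendsto (fun B => intensity B (M B) s) atTop atTop)
    (hs' : Tendsto (fun B => intensity B (M B) (s + 2)) atTop (𝓝 0)) :
    Tendsto (fun B => (placementMeasure B (M B)).real {f | maxLoad f = s ∨ maxLoad f = s + 1})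
      atTop (𝓝 1) := by
  have lower : Tendsto (fun B => 1 - (placementMeasure B (M B)).real {f | binsWithLoad f s = 0} -
      (placementMeasure B (M B)).real {f | s + 2 ≤ maxLoad f}) atTop (𝓝 1) := by
    simpa using ((tendsto_measureReal_binsWithLoad_eq_zero hM hMB hs).const_sub 1).sub
      (tendsto_measureReal_le_maxLoad hs')
  have isProbabilityMeasure : ∀ᶠ B in atTop, IsProbabilityMeasure (placementMeasure B (M B)) := by
    filter_upwards [eventually_ne_atTop 0] with B hB
    have : NeZero B := ⟨hB⟩
    exact isProbabilityMeasure_uniformOn Set.finite_univ Set.univ_nonempty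
  refine tendsto_of_tendsto_of_tendsto_of_le_of_le' lower tendsto_const_nhds ?_ ?_
  · filter_upwards [isProbabilityMeasure] with B _
    exact one_sub_sub_le_measureReal_maxLoad_eq_or_eq _ s
  · filter_upwards [isProbabilityMeasure] with B _ using measureReal_le_one

end Asymptotics

section Scaling

open Topology

variable {M : ℕ → ℕ} {a : ℝ}

lemma mul_rpow_div_pow {x : ℝ} (hx : 0 < x) (a : ℝ) (r : ℕ) :
    x * (x ^ a / x) ^ r = x ^ (1 - r * (1 - a)) := by
  calc x * (x ^ a / x) ^ r = x ^ (1 : ℝ) * x ^ ((a - 1) * r) := by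
        rw [Real.rpow_one, Real.rpow_mul_natCast hx.le, Real.rpow_sub_one hx.ne']
    _ = x ^ (1 - r * (1 - a)) := by
        rw [← Real.rpow_add hx]
        ring_nf

lemma tendsto_natCast_rpow_atTop (ha : 0 < a) :
    Tendsto (fun n : ℕ => (n : ℝ) ^ a) atTop atTop :=
  (tendsto_rpow_atTop ha).comp tendsto_natCast_atTop_atTop

lemma tendsto_natCast_rpow_zero (ha : a < 0) :
    Tendsto (fun n : ℕ => (n : ℝ) ^ a) atTop (𝓝 0) := by
  simpa [Function.comp_def] using
    (tendsto_rpow_neg_atTop (neg_pos.2 ha)).comp tendsto_natCast_atTop_atTop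

lemma tendsto_atTop_of_isTheta_rpow (ha : 0 < a)
    (hM : (fun B => (M B : ℝ)) =Θ[atTop] fun B : ℕ => (B : ℝ) ^ a) : Tendsto M atTop atTop := by
  have norm_tendsto := hM.tendsto_norm_atTop_iff.2
    (tendsto_norm_atTop_atTop.comp (tendsto_natCast_rpow_atTop ha))
  exact tendsto_natCast_atTop_iff.1 (norm_tendsto.congr fun B => Real.norm_natCast (M B))

lemma tendsto_div_of_isTheta_rpow (ha : a < 1)
    (hM : (fun B => (M B : ℝ)) =Θ[atTop] fun B : ℕ => (B : ℝ) ^ a) :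
    Tendsto (fun B => (M B / B : ℝ)) atTop (𝓝 0) := by
  refine (hM.div (isTheta_refl (fun B : ℕ => (B : ℝ)) _)).tendsto_zero_iff.2 ?_
  refine (tendsto_natCast_rpow_zero (sub_neg.2 ha)).congr' ?_
  filter_upwards [eventually_ne_atTop 0] with B hB
  exact Real.rpow_sub_one (Nat.cast_ne_zero.2 hB) a

lemma isEquivalent_intensity (hM : Tendsto M atTop atTop) (r : ℕ) :
    (fun B => intensity B (M B) r) ~[atTop]
      fun B => (B : ℝ) * (M B / B : ℝ) ^ r / r.factorial := by
  refine (IsEquivalent.refl.mul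
    (((isEquivalent_choose r).comp_tendsto hM).div .refl)).congr_right (.of_forall fun B => ?_)
  simp only [Pi.mul_apply, Pi.div_apply, Function.comp_apply]
  ring

lemma isTheta_intensity (ha : 0 < a)
    (hM : (fun B => (M B : ℝ)) =Θ[atTop] fun B : ℕ => (B : ℝ) ^ a) (r : ℕ) :
    (fun B => intensity B (M B) r) =Θ[atTop] fun B : ℕ => (B : ℝ) ^ (1 - r * (1 - a)) := by
  have factorial_ne_zero : (r.factorial : ℝ) ≠ 0 := Nat.cast_ne_zero.2 r.factorial_ne_zero
  have scaled : (fun B => (B * (M B / B) ^ r / r.factorial : ℝ)) =Θ[atTop]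
      fun B : ℕ => B * ((B : ℝ) ^ a / B) ^ r / 1 :=
    ((isTheta_refl _ _).mul ((hM.div (isTheta_refl _ _)).pow r)).div
      (isTheta_const_const factorial_ne_zero one_ne_zero)
  refine (isEquivalent_intensity (tendsto_atTop_of_isTheta_rpow ha hM) r).isTheta.trans
    (scaled.trans_eventuallyEq ?_)
  filter_upwards [eventually_gt_atTop 0] with B hB
  rw [div_one, mul_rpow_div_pow (Nat.cast_pos.2 hB)]

lemma tendsto_intensity_atTop {r : ℕ} (ha : 0 < a) (hr : r * (1 - a) < 1)
    (hM : (fun B => (M B : ℝ)) =Θ[atTop] fun B : ℕ => (B : ℝ) ^ a) :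
    Tendsto (fun B => intensity B (M B) r) atTop atTop := by
  have := (isTheta_intensity ha hM r).tendsto_norm_atTop_iff.2
    (tendsto_norm_atTop_atTop.comp (tendsto_natCast_rpow_atTop (sub_pos.2 hr)))
  refine this.congr fun B => ?_
  exact Real.norm_of_nonneg (by unfold intensity; positivity)

lemma tendsto_intensity_zero {r : ℕ} (ha : 0 < a) (hr : 1 < r * (1 - a))
    (hM : (fun B => (M B : ℝ)) =Θ[atTop] fun B : ℕ => (B : ℝ) ^ a) :
    Tendsto (fun B => intensity B (M B) r) atTop (𝓝 0) :=
  (isTheta_intensity ha hM r).tendsto_zero_iff.2 (tendsto_natCast_rpow_zero (sub_neg.2 hr))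

lemma tendsto_intensity_of_isEquivalent {r : ℕ} {C : ℝ} (ha : 0 < a) (hr : r * (1 - a) = 1)
    (hC : C ≠ 0) (hM : (fun B => (M B : ℝ)) ~[atTop] fun B : ℕ => C * (B : ℝ) ^ a) :
    Tendsto (fun B => intensity B (M B) r) atTop (𝓝 (C ^ r / r.factorial)) := by
  have hMtheta : (fun B => (M B : ℝ)) =Θ[atTop] fun B : ℕ => (B : ℝ) ^ a :=
    hM.isTheta.trans ((isTheta_refl _ _).const_mul_left hC)
  have scaled : (fun B => (B * (M B / B) ^ r : ℝ)) ~[atTop]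
      fun B : ℕ => B * (C * (B : ℝ) ^ a / B) ^ r :=
    .mul .refl ((hM.div .refl).pow r)
  refine ((isEquivalent_intensity (tendsto_atTop_of_isTheta_rpow ha hMtheta) r).trans
    (scaled.div .refl)).symm.tendsto_nhds (tendsto_const_nhds.congr' ?_)
  filter_upwards [eventually_gt_atTop 0] with B hB
  have rpow_eq := mul_rpow_div_pow (Nat.cast_pos.2 hB) a r (x := B)
  rw [hr, sub_self, Real.rpow_zero] at rpow_eq
  rw [Pi.div_apply, mul_div_assoc C, mul_pow, mul_left_comm, rpow_eq, mul_one]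

end Scaling

/-- **Theorem 3(c).** In the balls and bins problem with `B` bins and `M(B)` balls, if
`M(B) = Θ(B^(1 - 1/s))` for a fixed integer `s ≥ 2`, then w.h.p. the maximum load is
`s - 1` or `s`. Moreover, if `M(B) = C·B^(1 - 1/s)·(1 + o(1))` with `C > 0`, then the
number `X_B` of bins containing exactly `s` balls converges in distribution to the
Poisson distribution with parameter `C^s/s!`. -/
theorem maxLoad_critical (s : ℕ) (hs : 2 ≤ s) (M : ℕ → ℕ)
    (hM : (fun B : ℕ => (M B : ℝ)) =Θ[atTop]
      fun B : ℕ => (B : ℝ) ^ ((1 : ℝ) - 1 / (s : ℝ))) :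
    Tendsto (fun B : ℕ => bbProb B (M B) fun f => maxLoad f = s - 1 ∨ maxLoad f = s)
        atTop (nhds 1) ∧
      ∀ C : ℝ, 0 < C →
        ((fun B : ℕ => (M B : ℝ)) ~[atTop]
          fun B : ℕ => C * (B : ℝ) ^ ((1 : ℝ) - 1 / (s : ℝ))) →
        ∀ j : ℕ,
          Tendsto (fun B : ℕ => bbProb B (M B) fun f => binsWithLoad f s = j) atTop
            (nhds (Real.exp (-(C ^ s / (s.factorial : ℝ))) *
              (C ^ s / (s.factorial : ℝ)) ^ j / (j.factorial : ℝ))) := by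
  obtain ⟨r, rfl⟩ : ∃ r, s = r + 1 := ⟨s - 1, by lia⟩
  set a : ℝ := 1 - 1 / ((r + 1 : ℕ) : ℝ) with ha
  have one_sub_a : 1 - a = 1 / (r + 1) := by simp [ha]
  have a_lt_one : a < 1 := by
    rw [← sub_pos, one_sub_a]
    positivity
  have critical : (r + 1 : ℝ) * (1 - a) = 1 := by
    rw [one_sub_a]
    field_simp
  have a_pos : 0 < a := by
    have : (1 : ℝ) ≤ r := by exact_mod_cast Nat.le_of_succ_le_succ hs
    nlinarith
  have hM_atTop := tendsto_atTop_of_isTheta_rpow a_pos hM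
  have hM_div := tendsto_div_of_isTheta_rpow a_lt_one hM
  have subcritical : r * (1 - a) < 1 := by linarith
  have supercritical : 1 < ((r + 2 : ℕ) : ℝ) * (1 - a) := by
    push_cast
    linarith
  simp only [bbProb_eq_measureReal, Nat.add_sub_cancel]
  refine ⟨tendsto_measureReal_maxLoad_eq_or_eq hM_atTop hM_div
    (tendsto_intensity_atTop a_pos subcritical hM) (tendsto_intensity_zero a_pos supercritical hM),
    fun C hC hMC => tendsto_measureReal_binsWithLoad_eq hM_atTop hM_div
      (tendsto_intensity_of_isEquivalent a_pos (by exact_mod_cast critical) hC.ne' hMC)⟩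

end BallsBins
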